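/- For every x ∈ ℝ, lim_{λ→∞} −λ^{-1} log μ^λ(x) = max_{x'∈[0,1]} max_{y'∈[x',x'+1]} (S(y')−S(x')) − max_{y∈[x,x+1]} (S(y)−S(x)), which also equals min_{y∈[x,x+1]} (S(x)−S(y)) − min_{x'∈[0,1]} min_{y'∈[x',x'+1]} (S(x')−S(y')). -/

import Mathlib

open Set Filter Topology

/-!
Laplace's principle: if `X` has essential supremum `M` for a finite measure, then
`l⁻¹ log ∫ exp (l X) → M`. The upper bound is immediate from `X ≤ M`; Chernoff's inequality
`μ {c ≤ X} ≤ exp (-l c) ∫ exp (l X)`, applied with `c < M`, is the lower bound.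

The factor `g` is absorbed into the measure. The principle is applied to the integral over the
window `[x, x + T]` defining the unnormalised density, and to the double integral defining its
normalisation, which the shear `y = x + t` turns into an integral over a rectangle. The rate
function is the difference of the two suprema.
-/

open MeasureTheory ProbabilityTheory

section LaplacePrinciple

theorem tendsto_add_const_div_atTop (a b : ℝ) :
    Tendsto (fun l : ℝ => a + b / l) atTop (𝓝 a) := by
  simpa only [add_zero, id_eq] using (tendsto_id.const_div_atTop b).const_add a

section Cgf

variable {Ω : Type*} [MeasurableSpace Ω] {μ : Measure Ω} [IsFiniteMeasure μ] {X : Ω → ℝ}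
  {M c l : ℝ}

theorem cgf_div_le_add_log_measureReal_univ_div [NeZero μ] (hX : AEMeasurable X μ)
    (hXM : ∀ᵐ ω ∂μ, X ω ≤ M) (hl : 0 < l) :
    cgf X μ l / l ≤ M + Real.log (μ.real univ) / l := by
  have hint : Integrable (fun ω => Real.exp (l * X ω)) μ :=
    integrable_exp_mul_of_le l M hl.le hX hXM
  have hmgf : mgf X μ l ≤ μ.real univ * Real.exp (l * M) := by
    rw [← smul_eq_mul, ← integral_const]
    refine integral_mono_ae hint (integrable_const _) ?_
    filter_upwards [hXM] with ω hω
    gcongr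
  have hcgf : cgf X μ l ≤ Real.log (μ.real univ) + l * M := by
    have hlog := Real.log_le_log (mgf_pos' (NeZero.ne μ) hint) hmgf
    rwa [Real.log_mul measureReal_univ_ne_zero (Real.exp_ne_zero _), Real.log_exp] at hlog
  calc cgf X μ l / l ≤ (Real.log (μ.real univ) + l * M) / l := by gcongr
    _ = M + Real.log (μ.real univ) / l := by field_simp; ring

theorem add_log_measureReal_ge_div_le_cgf_div (hc : 0 < μ {ω | c ≤ X ω})
    (hint : Integrable (fun ω => Real.exp (l * X ω)) μ) (hl : 0 < l) :
    c + Real.log (μ.real {ω | c ≤ X ω}) / l ≤ cgf X μ l / l := by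
  have hreal : 0 < μ.real {ω | c ≤ X ω} := ENNReal.toReal_pos hc.ne' (measure_ne_top _ _)
  have hchernoff : Real.log (μ.real {ω | c ≤ X ω}) ≤ -l * c + cgf X μ l :=
    (Real.log_le_iff_le_exp hreal).2 (measure_ge_le_exp_cgf c hl.le hint)
  calc c + Real.log (μ.real {ω | c ≤ X ω}) / l
      = (l * c + Real.log (μ.real {ω | c ≤ X ω})) / l := by field_simp
    _ ≤ cgf X μ l / l := by gcongr; linarith

theorem tendsto_cgf_div_atTop (hX : AEMeasurable X μ) (hXM : ∀ᵐ ω ∂μ, X ω ≤ M)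
    (hpos : ∀ c < M, 0 < μ {ω | c ≤ X ω}) :
    Tendsto (fun l => cgf X μ l / l) atTop (𝓝 M) := by
  have : NeZero μ := ⟨fun hμ => (hpos (M - 1) (sub_one_lt M)).ne' (by simp [hμ])⟩
  refine tendsto_order.2 ⟨fun a ha => ?_, fun a ha => ?_⟩
  · obtain ⟨c, hac, hcM⟩ := exists_between ha
    filter_upwards [(tendsto_add_const_div_atTop c _).eventually_const_lt hac,
      eventually_gt_atTop 0] with l hlt hl
    exact hlt.trans_le (add_log_measureReal_ge_div_le_cgf_div (hpos c hcM)
      (integrable_exp_mul_of_le l M hl.le hX hXM) hl)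
  · filter_upwards [(tendsto_add_const_div_atTop M _).eventually_lt_const ha,
      eventually_gt_atTop 0] with l hlt hl
    exact (cgf_div_le_add_log_measureReal_univ_div hX hXM hl).trans_lt hlt

end Cgf

theorem mgf_withDensity_ofReal_restrict {Ω : Type*} [MeasurableSpace Ω] {ν : Measure Ω} {K : Set Ω}
    {G φ : Ω → ℝ} (hK : MeasurableSet K) (hG : AEMeasurable G (ν.restrict K))
    (hGnonneg : ∀ p ∈ K, 0 ≤ G p) (l : ℝ) :
    mgf φ ((ν.restrict K).withDensity fun p => ENNReal.ofReal (G p)) l =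
      ∫ p in K, G p * Real.exp (l * φ p) ∂ν := by
  rw [mgf, integral_withDensity_eq_integral_toReal_smul₀ hG.ennreal_ofReal
    (ae_of_all _ fun _ => ENNReal.ofReal_lt_top)]
  refine setIntegral_congr_fun hK fun p hp => ?_
  simp only [ENNReal.toReal_ofReal (hGnonneg p hp), smul_eq_mul]

section Compact

variable {E : Type*} [TopologicalSpace E] [MeasurableSpace E] {ν : Measure E} {K : Set E}

theorem measure_inter_pos_of_mem_nhdsWithin [ν.IsOpenPosMeasure] {s : Set E} {p : E}
    (hp : p ∈ closure (interior K)) (hs : s ∈ 𝓝[K] p) : 0 < ν (s ∩ K) := by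
  obtain ⟨U, hU, hpU, hUs⟩ := mem_nhdsWithin.1 hs
  have hne : (U ∩ interior K).Nonempty := mem_closure_iff.1 hp U hU hpU
  have hsub : U ∩ interior K ⊆ s ∩ K := fun q hq =>
    ⟨hUs ⟨hq.1, interior_subset hq.2⟩, interior_subset hq.2⟩
  exact ((hU.inter isOpen_interior).measure_pos ν hne).trans_le (measure_mono hsub)

variable [OpensMeasurableSpace E] [T2Space E] {G φ : E → ℝ}

theorem tendsto_log_setIntegral_mul_exp_div_atTop [ν.IsOpenPosMeasure] (hK : IsCompact K)
    (hne : K.Nonempty) (hreg : K ⊆ closure (interior K)) (hG : IntegrableOn G K ν)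
    (hGpos : ∀ p ∈ K, 0 < G p) (hφ : ContinuousOn φ K) :
    Tendsto (fun l => Real.log (∫ p in K, G p * Real.exp (l * φ p) ∂ν) / l) atTop
      (𝓝 (sSup (φ '' K))) := by
  let ρ : Measure E := (ν.restrict K).withDensity fun p => ENNReal.ofReal (G p)
  have : IsFiniteMeasure ρ := isFiniteMeasure_withDensity_ofReal hG.2
  have hρac : ρ ≪ ν.restrict K := withDensity_absolutelyContinuous _ _
  have hacρ : ν.restrict K ≪ ρ := by
    refine withDensity_absolutelyContinuous' hG.aemeasurable.ennreal_ofReal ?_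
    filter_upwards [ae_restrict_mem hK.measurableSet] with p hp
    exact (ENNReal.ofReal_pos.2 (hGpos p hp)).ne'
  have hle : ∀ᵐ p ∂ρ, φ p ≤ sSup (φ '' K) := hρac.ae_le <| by
    filter_upwards [ae_restrict_mem hK.measurableSet] with p hp
    exact le_csSup (hK.bddAbove_image hφ) (mem_image_of_mem φ hp)
  have hpos : ∀ c < sSup (φ '' K), 0 < ρ {p | c ≤ φ p} := by
    intro c hc
    obtain ⟨p, hp, hpmax⟩ := hK.exists_sSup_image_eq hne hφ
    have hnhds : {q | c ≤ φ q} ∈ 𝓝[K] p := (hφ p hp).eventually_const_le (hpmax ▸ hc)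
    refine pos_iff_ne_zero.2 fun hzero => ?_
    have hzero' := hacρ hzero
    rw [Measure.restrict_apply' hK.measurableSet] at hzero'
    exact (measure_inter_pos_of_mem_nhdsWithin (hreg hp) hnhds).ne' hzero'
  have hφρ : AEMeasurable φ ρ := (hφ.aemeasurable hK.measurableSet).mono_ac hρac
  simpa only [cgf, ρ, mgf_withDensity_ofReal_restrict hK.measurableSet hG.aemeasurable
    fun p hp => (hGpos p hp).le] using tendsto_cgf_div_atTop hφρ hle hpos

end Compact

end LaplacePrinciple

section Suprema

theorem csSup_image_prod {α β γ : Type*} [ConditionallyCompleteLattice γ] {s : Set α} {t : Set β}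
    {f : α × β → γ} (hs : s.Nonempty) (ht : t.Nonempty) (hf : BddAbove (f '' s ×ˢ t)) :
    sSup (f '' s ×ˢ t) = sSup ((fun a => sSup ((fun b => f (a, b)) '' t)) '' s) := by
  have hrow_le : ∀ a ∈ s, ∀ c ∈ upperBounds (f '' s ×ˢ t), ∀ b ∈ t, f (a, b) ≤ c :=
    fun a ha c hc b hb => hc (mem_image_of_mem f (mk_mem_prod ha hb))
  have hrow : ∀ a ∈ s, BddAbove ((fun b => f (a, b)) '' t) := fun a ha =>
    hf.imp fun c hc => forall_mem_image.2 (hrow_le a ha c hc)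
  have hrows : BddAbove ((fun a => sSup ((fun b => f (a, b)) '' t)) '' s) :=
    hf.imp fun c hc => forall_mem_image.2 fun a ha =>
      csSup_le (ht.image _) (forall_mem_image.2 (hrow_le a ha c hc))
  refine eq_of_forall_ge_iff fun c => ?_
  rw [csSup_le_iff hf ((hs.prod ht).image f), csSup_le_iff hrows (hs.image _),
    forall_mem_image, forall_mem_image, forall_prod_set]
  refine forall₂_congr fun a ha => ?_
  rw [csSup_le_iff (hrow a ha) (ht.image _), forall_mem_image]

theorem sInf_image_neg {α : Type*} (f : α → ℝ) (s : Set α) :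
    sInf ((fun a => -f a) '' s) = -sSup (f '' s) := by
  rw [← Real.sInf_neg, ← image_neg_eq_neg, image_image]

end Suprema

section IntervalIntegral

variable {E : Type*} [NormedAddCommGroup E] [NormedSpace ℝ E]

theorem intervalIntegral_intervalIntegral_eq_setIntegral_prod {f : ℝ × ℝ → E} {a b c d : ℝ}
    (hab : a ≤ b) (hcd : c ≤ d) (hf : IntegrableOn f (Icc a b ×ˢ Icc c d)) :
    ∫ x in a..b, ∫ y in c..d, f (x, y) = ∫ p in Icc a b ×ˢ Icc c d, f p := by
  simp only [intervalIntegral.integral_of_le hab, intervalIntegral.integral_of_le hcd,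
    ← integral_Icc_eq_integral_Ioc]
  exact (setIntegral_prod f hf).symm

theorem continuous_of_eq_intervalIntegral {f S : ℝ → E} {a : ℝ} (hf : Continuous f)
    (hS : ∀ x, S x = ∫ y in a..x, f y) : Continuous S := by
  rw [funext hS]
  exact intervalIntegral.continuous_primitive hf.intervalIntegrable a

end IntervalIntegral

section Window

/-- The largest increase `max_{y ∈ [x, x + T]} (S y - S x)` of the potential `S` over the window of
length `T` starting at `x`. -/
noncomputable def windowRise (S : ℝ → ℝ) (T x : ℝ) : ℝ :=
  sSup ((fun y => S y - S x) '' Icc x (x + T))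

/-- The unnormalised stationary density at `x` for switching intensity `l`, with kernel `g`,
potential `S` and period `T`. -/
noncomputable def windowWeight (g : ℝ → ℝ → ℝ) (S : ℝ → ℝ) (T l x : ℝ) : ℝ :=
  ∫ y in x..(x + T), g x y * Real.exp (l * (S y - S x))

theorem windowRise_eq_sSup_shift (S : ℝ → ℝ) (T x : ℝ) :
    windowRise S T x = sSup ((fun t => S (x + t) - S x) '' Icc 0 T) := by
  have hshift : Icc x (x + T) = (fun t => x + t) '' Icc 0 T := by
    rw [image_const_add_Icc, add_zero]
  rw [windowRise, hshift, image_image]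

theorem sSup_windowRise_sub_windowRise (S : ℝ → ℝ) (T x : ℝ) (s : Set ℝ) :
    sSup (windowRise S T '' s) - windowRise S T x =
      sInf ((fun y => S x - S y) '' Icc x (x + T)) -
        sInf ((fun x' => sInf ((fun y => S x' - S y) '' Icc x' (x' + T))) '' s) := by
  have hfall (z : ℝ) : sInf ((fun y => S z - S y) '' Icc z (z + T)) = -windowRise S T z := by
    simp only [windowRise, ← sInf_image_neg, neg_sub]
  simp only [hfall, sInf_image_neg]
  ring

theorem windowWeight_eq_integral_shift (g : ℝ → ℝ → ℝ) (S : ℝ → ℝ) (T l x : ℝ) :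
    windowWeight g S T l x = ∫ t in 0..T, g x (x + t) * Real.exp (l * (S (x + t) - S x)) := by
  rw [windowWeight, intervalIntegral.integral_comp_add_left
    (fun y => g x y * Real.exp (l * (S y - S x))), add_zero]

variable {g : ℝ → ℝ → ℝ} {S : ℝ → ℝ} {T a b : ℝ}

theorem continuous_windowWeight (hg : Continuous (Function.uncurry g)) (hS : Continuous S)
    (T l : ℝ) : Continuous (windowWeight g S T l) := by
  simp only [funext (windowWeight_eq_integral_shift g S T l)]
  exact intervalIntegral.continuous_parametric_intervalIntegral_of_continuous' (by fun_prop) 0 T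

theorem windowWeight_pos (hg : Continuous (Function.uncurry g)) (hS : Continuous S)
    (hgpos : ∀ x y, 0 < g x y) (hT : 0 < T) (l x : ℝ) : 0 < windowWeight g S T l x :=
  intervalIntegral.intervalIntegral_pos_of_pos
    (Continuous.intervalIntegrable (by fun_prop) _ _)
    (fun y => mul_pos (hgpos x y) (Real.exp_pos _)) (lt_add_of_pos_right x hT)

theorem integral_windowWeight_pos (hg : Continuous (Function.uncurry g)) (hS : Continuous S)
    (hgpos : ∀ x y, 0 < g x y) (hT : 0 < T) (hab : a < b) (l : ℝ) :
    0 < ∫ x in a..b, windowWeight g S T l x :=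
  intervalIntegral.intervalIntegral_pos_of_pos
    ((continuous_windowWeight hg hS T l).intervalIntegrable a b)
    (windowWeight_pos hg hS hgpos hT l) hab

theorem tendsto_log_windowWeight_div_atTop (hg : Continuous (Function.uncurry g))
    (hS : Continuous S) (hgpos : ∀ x y, 0 < g x y) (hT : 0 < T) (x : ℝ) :
    Tendsto (fun l => Real.log (windowWeight g S T l x) / l) atTop (𝓝 (windowRise S T x)) := by
  have hlt : x < x + T := lt_add_of_pos_right x hT
  simp only [windowWeight, intervalIntegral.integral_of_le hlt.le, ← integral_Icc_eq_integral_Ioc]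
  exact tendsto_log_setIntegral_mul_exp_div_atTop isCompact_Icc (nonempty_Icc.2 hlt.le)
    (closure_interior_Icc hlt.ne).ge (Continuous.integrableOn_Icc (by fun_prop))
    (fun y _ => hgpos x y) (by fun_prop)

theorem tendsto_log_integral_windowWeight_div_atTop (hg : Continuous (Function.uncurry g))
    (hS : Continuous S) (hgpos : ∀ x y, 0 < g x y) (hT : 0 < T) (hab : a < b) :
    Tendsto (fun l => Real.log (∫ x in a..b, windowWeight g S T l x) / l) atTop
      (𝓝 (sSup (windowRise S T '' Icc a b))) := by
  let R : Set (ℝ × ℝ) := Icc a b ×ˢ Icc 0 T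
  let G : ℝ × ℝ → ℝ := fun p => g p.1 (p.1 + p.2)
  let φ : ℝ × ℝ → ℝ := fun p => S (p.1 + p.2) - S p.1
  have hG : Continuous G := by fun_prop
  have hφ : Continuous φ := by fun_prop
  have hR : IsCompact R := isCompact_Icc.prod isCompact_Icc
  have hRne : R.Nonempty := (nonempty_Icc.2 hab.le).prod (nonempty_Icc.2 hT.le)
  have hRreg : closure (interior R) = R := by
    rw [interior_prod_eq, closure_prod_eq, closure_interior_Icc hab.ne, closure_interior_Icc hT.ne]
  have hsup : sSup (φ '' R) = sSup (windowRise S T '' Icc a b) := by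
    rw [csSup_image_prod (nonempty_Icc.2 hab.le) (nonempty_Icc.2 hT.le)
      (hR.bddAbove_image hφ.continuousOn), funext (windowRise_eq_sSup_shift S T)]
  have hint (l : ℝ) :
      ∫ x in a..b, windowWeight g S T l x = ∫ p in R, G p * Real.exp (l * φ p) := by
    rw [← intervalIntegral_intervalIntegral_eq_setIntegral_prod hab.le hT.le
      (Continuous.continuousOn (by fun_prop) |>.integrableOn_compact hR)]
    simp only [windowWeight_eq_integral_shift, G, φ]
  simp only [hint, ← hsup]
  exact tendsto_log_setIntegral_mul_exp_div_atTop hR hRne hRreg.ge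
    (hG.continuousOn.integrableOn_compact hR) (fun p _ => hgpos _ _) hφ.continuousOn

end Window

theorem stmt_2_general {g : ℝ → ℝ → ℝ} {S : ℝ → ℝ} {T a b : ℝ}
    (hg : Continuous (Function.uncurry g)) (hS : Continuous S) (hgpos : ∀ x y, 0 < g x y)
    (hT : 0 < T) (hab : a < b) {Z : ℝ → ℝ}
    (hZ : ∀ l : ℝ, 0 < l → Z l = ∫ x in a..b, windowWeight g S T l x) {μ : ℝ → ℝ → ℝ}
    (hμ : ∀ l : ℝ, 0 < l → ∀ x, μ l x = (Z l)⁻¹ * windowWeight g S T l x) (x : ℝ) :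
    Tendsto (fun l => -(1 / l) * Real.log (μ l x)) atTop
      (𝓝 (sSup (windowRise S T '' Icc a b) - windowRise S T x)) ∧
    sSup (windowRise S T '' Icc a b) - windowRise S T x =
      sInf ((fun y => S x - S y) '' Icc x (x + T)) -
        sInf ((fun x' => sInf ((fun y => S x' - S y) '' Icc x' (x' + T))) '' Icc a b) := by
  refine ⟨?_, sSup_windowRise_sub_windowRise S T x (Icc a b)⟩
  refine ((tendsto_log_integral_windowWeight_div_atTop hg hS hgpos hT hab).sub
    (tendsto_log_windowWeight_div_atTop hg hS hgpos hT x)).congr' ?_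
  filter_upwards [eventually_gt_atTop 0] with l hl
  have hZpos := integral_windowWeight_pos hg hS hgpos hT hab l
  have hWpos := windowWeight_pos hg hS hgpos hT l x
  rw [hμ l hl, hZ l hl, Real.log_mul (inv_ne_zero hZpos.ne') hWpos.ne', Real.log_inv]
  ring

theorem continuous_uncurry_switchingKernel {F0 F1 r01 r10 : ℝ → ℝ} (hF0 : Continuous F0)
    (hF1 : Continuous F1) (hF0ne : ∀ x, F0 x ≠ 0) (hF1ne : ∀ x, F1 x ≠ 0)
    (hr01 : Continuous r01) (hr10 : Continuous r10) :
    Continuous (Function.uncurry fun x y => r10 y / (F0 x * F1 y) + r01 y / (F1 x * F0 y)) := by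
  refine Continuous.add (Continuous.div (by fun_prop) (by fun_prop) fun p => ?_)
    (Continuous.div (by fun_prop) (by fun_prop) fun p => ?_)
  · exact mul_ne_zero (hF0ne _) (hF1ne _)
  · exact mul_ne_zero (hF1ne _) (hF0ne _)

/-- large deviations as `λ → ∞` of the stationary density `μ^λ` of the
mechanical variable of the PDMP:
`lim_{λ→∞} −λ⁻¹ log μ^λ(x) = max_{x'∈[0,1]} max_{y'∈[x',x'+1]} (S(y')−S(x'))
  − max_{y∈[x,x+1]} (S(y)−S(x))`, which also equals
`min_{y∈[x,x+1]} (S(x)−S(y)) − min_{x'∈[0,1]} min_{y'∈[x',x'+1]} (S(x')−S(y'))`. -/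
theorem stmt_2
    (F0 F1 r01 r10 : ℝ → ℝ)
    (K0 K1 : NNReal) (hF0 : LipschitzWith K0 F0) (hF1 : LipschitzWith K1 F1)
    (hF0per : ∀ x, F0 (x + 1) = F0 x) (hF1per : ∀ x, F1 (x + 1) = F1 x)
    (hF0ne : ∀ x, F0 x ≠ 0) (hF1ne : ∀ x, F1 x ≠ 0)
    (hr01 : Continuous r01) (hr10 : Continuous r10)
    (hr01pos : ∀ x, 0 < r01 x) (hr10pos : ∀ x, 0 < r10 x)
    (hr01per : ∀ x, r01 (x + 1) = r01 x) (hr10per : ∀ x, r10 (x + 1) = r10 x)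
    (S : ℝ → ℝ) (hS : ∀ x, S x = ∫ y in (0:ℝ)..x, (r01 y / F0 y + r10 y / F1 y))
    (g : ℝ → ℝ → ℝ)
    (hg : ∀ x y, g x y = r10 y / (F0 x * F1 y) + r01 y / (F1 x * F0 y))
    (hgpos : ∀ x y, 0 < g x y)
    (Z : ℝ → ℝ)
    (hZ : ∀ l : ℝ, 0 < l →
      Z l = ∫ x in (0:ℝ)..1, ∫ y in x..(x + 1), g x y * Real.exp (l * (S y - S x)))
    (μ : ℝ → ℝ → ℝ)
    (hμ : ∀ l : ℝ, 0 < l → ∀ x,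
      μ l x = (Z l)⁻¹ * ∫ y in x..(x + 1), g x y * Real.exp (l * (S y - S x)))
    (x : ℝ) :
    Tendsto (fun l => -(1 / l) * Real.log (μ l x)) atTop
      (nhds (sSup ((fun x' => sSup ((fun y => S y - S x') '' Icc x' (x' + 1))) '' Icc 0 1)
        - sSup ((fun y => S y - S x) '' Icc x (x + 1)))) ∧
    sSup ((fun x' => sSup ((fun y => S y - S x') '' Icc x' (x' + 1))) '' Icc 0 1)
        - sSup ((fun y => S y - S x) '' Icc x (x + 1))
      = sInf ((fun y => S x - S y) '' Icc x (x + 1))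
        - sInf ((fun x' => sInf ((fun y => S x' - S y) '' Icc x' (x' + 1))) '' Icc 0 1) := by
  have hS_cont : Continuous S :=
    continuous_of_eq_intervalIntegral
      ((hr01.div hF0.continuous hF0ne).add (hr10.div hF1.continuous hF1ne)) hS
  have hg_cont : Continuous (Function.uncurry g) := by
    rw [show g = _ from funext₂ hg]
    exact continuous_uncurry_switchingKernel hF0.continuous hF1.continuous hF0ne hF1ne hr01 hr10
  exact stmt_2_general hg_cont hS_cont hgpos one_pos one_pos hZ hμ x
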